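/- arXiv:2008.01011 — 3 statements merged into one kernel-verified Lean document; each statement's English description precedes it below -/
import Mathlib

section
/- Let X be a real Banach space, S ⊆ X, and let P be a Borel probability measure on S. Let s > 0 and c, ε0 > 0 be such that P(S ∩ B̄(y, ε)) ≤ 2^{−c·ε^{−1/s}} for all y ∈ X and all ε ∈ (0, ε0). Then for every R ∈ ℕ, every encoding/decoding pair (E, D) of code-length R for S, and every ε ∈ (0, ε0), the outer measure satisfies P*({x ∈ S : ‖x − D(E(x))‖ ≤ ε}) ≤ 2^{R − c·ε^{−1/s}}. -/
open MeasureTheory Metric Set ENNReal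

noncomputable section

variable {X : Type*}

/-- `CompressibleAt S s`: there is a codec `(E_R, D_R)_{R ∈ ℕ}` for `S` with
`sup_{R ∈ ℕ} R^s · δ(E_R, D_R) < ∞`. -/
def CompressibleAt [NormedAddCommGroup X] (S : Set X) (s : ℝ) : Prop :=
  ∃ (E : (R : ℕ) → S → (Fin R → Bool)) (D : (R : ℕ) → (Fin R → Bool) → X) (K : ℝ),
    ∀ R : ℕ, 0 < R → ∀ x : S, (R : ℝ) ^ s * ‖(x : X) - D R (E R x)‖ ≤ K

/-- The optimal compression rate `s*(S, X) ∈ [0,∞]`. -/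
def optRate [NormedAddCommGroup X] (S : Set X) : ℝ≥0∞ :=
  sSup (ENNReal.ofReal '' {s : ℝ | 0 ≤ s ∧ CompressibleAt S s})

/-- The approximation class `A^s(C)` of a codec `C = (E, D)`. -/
def approxClass [NormedAddCommGroup X] (S : Set X)
    (E : (R : ℕ) → S → (Fin R → Bool)) (D : (R : ℕ) → (Fin R → Bool) → X)
    (s : ℝ) : Set S :=
  {x : S | ∃ K : ℝ, ∀ R : ℕ, 0 < R → (R : ℝ) ^ s * ‖(x : X) - D R (E R x)‖ ≤ K}

/-- `P` has (logarithmic) growth order `s₀`. -/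
def HasGrowthOrder [NormedAddCommGroup X] [MeasurableSpace X] (S : Set X)
    (P : Measure S) (s₀ : ℝ) : Prop :=
  ∀ s : ℝ, s₀ < s → ∃ ε₀ c : ℝ, 0 < ε₀ ∧ 0 < c ∧
    ∀ (x : X) (ε : ℝ), 0 < ε → ε < ε₀ →
      P {y : S | (y : X) ∈ Metric.closedBall x ε} ≤
        ENNReal.ofReal ((2 : ℝ) ^ (-(c * ε ^ (-(1 : ℝ) / s))))

theorem two_pow_mul_ofReal_two_rpow_neg (R : ℕ) (t : ℝ) :
    2 ^ R * ENNReal.ofReal ((2 : ℝ) ^ (-t)) = ENNReal.ofReal ((2 : ℝ) ^ ((R : ℝ) - t)) := by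
  rw [sub_eq_add_neg, Real.rpow_add two_pos, Real.rpow_natCast,
    ENNReal.ofReal_mul (by positivity), ENNReal.ofReal_pow two_pos.le, ENNReal.ofReal_ofNat]

section OuterMeasure

variable {Ω F : Type*} [FunLike F (Set Ω) ℝ≥0∞] [OuterMeasureClass F Ω]

theorem measure_setOf_mem_comp_le_card_mul {ι : Type*} [Fintype ι] (μ : F) (E : Ω → ι)
    {A : ι → Set Ω} {m : ℝ≥0∞} (hA : ∀ i, μ (A i) ≤ m) :
    μ {x | x ∈ A (E x)} ≤ Fintype.card ι * m :=
  calc μ {x | x ∈ A (E x)}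
      ≤ μ (⋃ i, A i) := measure_mono fun x hx => mem_iUnion_of_mem (E x) hx
    _ ≤ ∑ i, μ (A i) := measure_iUnion_fintype_le μ A
    _ ≤ Fintype.card ι * m := by
        simpa only [nsmul_eq_mul, Finset.card_univ] using
          Finset.sum_le_card_nsmul Finset.univ _ m fun i _ => hA i

theorem statement3_general [PseudoMetricSpace X] (μ : F) (f : Ω → X) {R : ℕ}
    (E : Ω → (Fin R → Bool)) (D : (Fin R → Bool) → X) {ε t : ℝ}
    (hball : ∀ b, μ {x | f x ∈ closedBall (D b) ε} ≤ ENNReal.ofReal ((2 : ℝ) ^ (-t))) :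
    μ {x | dist (f x) (D (E x)) ≤ ε} ≤ ENNReal.ofReal ((2 : ℝ) ^ ((R : ℝ) - t)) :=
  calc μ {x | dist (f x) (D (E x)) ≤ ε}
      ≤ Fintype.card (Fin R → Bool) * ENNReal.ofReal ((2 : ℝ) ^ (-t)) :=
        measure_setOf_mem_comp_le_card_mul μ E hball
    _ = 2 ^ R * ENNReal.ofReal ((2 : ℝ) ^ (-t)) := by
        rw [Fintype.card_pi_const, Fintype.card_bool, Nat.cast_pow, Nat.cast_ofNat]
    _ = ENNReal.ofReal ((2 : ℝ) ^ ((R : ℝ) - t)) := two_pow_mul_ofReal_two_rpow_neg R t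

end OuterMeasure

theorem statement3 {X : Type*} [NormedAddCommGroup X] [NormedSpace ℝ X] [CompleteSpace X]
    [MeasurableSpace X] [BorelSpace X]
    (S : Set X) (P : Measure S) [IsProbabilityMeasure P]
    (s c ε₀ : ℝ) (hs : 0 < s) (hc : 0 < c) (hε₀ : 0 < ε₀)
    (hgrowth : ∀ (y : X) (ε : ℝ), 0 < ε → ε < ε₀ →
      P {x : S | (x : X) ∈ Metric.closedBall y ε} ≤
        ENNReal.ofReal ((2 : ℝ) ^ (-(c * ε ^ (-(1 : ℝ) / s)))))
    (R : ℕ) (hR : 0 < R)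
    (E : S → (Fin R → Bool)) (D : (Fin R → Bool) → X)
    (ε : ℝ) (hε : 0 < ε) (hεε₀ : ε < ε₀) :
    P {x : S | ‖(x : X) - D (E x)‖ ≤ ε} ≤
      ENNReal.ofReal ((2 : ℝ) ^ ((R : ℝ) - c * ε ^ (-(1 : ℝ) / s))) := by
  simpa only [dist_eq_norm] using
    statement3_general P Subtype.val E D fun b => hgrowth (D b) ε hε hεε₀
end
end

section
/- Let X be a real Banach space, S ⊆ X, and let P be a Borel probability measure on S of growth order s0 ∈ [0,∞). Then s0 is an upper bound for the optimal compression rate of S: for every s ∈ [0,∞) for which there exists a codec C = (E_R, D_R)_{R∈ℕ} for S with sup_{R∈ℕ} R^s·δ(E_R, D_R) < ∞, one has s ≤ s0. In particular s*(S, X) ≤ s0. -/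
open MeasureTheory Metric Set ENNReal

noncomputable section

variable {X : Type*}

/-!
A code of length `R` has only `2 ^ R` reconstruction points, so if its distortion is at most `ε`
then `2 ^ R` closed `ε`-balls cover `S`. A rate `s` allows `ε = L * R ^ (-s)`. If `s₀ < t < s`,
the growth order bounds the mass of each ball by `2 ^ (-a)` with
`a = c * ε ^ (-1 / t) = const * R ^ (s / t)`. Since `s / t > 1`, the total mass, being at most
`2 ^ (R - a)`, then vanishes as `R → ∞`.
-/

open Filter Topology

section Asymptotics

theorem mul_rpow_neg_rpow_neg_one_div {L x : ℝ} (hL : 0 ≤ L) (hx : 0 ≤ x) (s t : ℝ) :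
    (L * x ^ (-s)) ^ (-1 / t) = L ^ (-1 / t) * x ^ (s / t) := by
  rw [Real.mul_rpow hL (Real.rpow_nonneg hx _), ← Real.rpow_mul hx]
  congr 2
  ring

theorem tendsto_sub_const_mul_rpow_atBot {C p : ℝ} (hC : 0 < C) (hp : 1 < p) :
    Tendsto (fun x : ℝ => x - C * x ^ p) atTop atBot := by
  have hfactor : (fun x : ℝ => x * (1 - C * x ^ (p - 1))) =ᶠ[atTop] fun x => x - C * x ^ p := by
    filter_upwards [eventually_gt_atTop 0] with x hx
    have hpow : x ^ p = x ^ (p - 1) * x := by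
      rw [← Real.rpow_add_one hx.ne', sub_add_cancel]
    rw [hpow]
    ring
  have hgrow : Tendsto (fun x : ℝ => C * x ^ (p - 1)) atTop atTop :=
    (tendsto_rpow_atTop (sub_pos.2 hp)).const_mul_atTop hC
  have hneg : Tendsto (fun x : ℝ => 1 - C * x ^ (p - 1)) atTop atBot := by
    simpa only [sub_eq_add_neg, Function.comp_def] using
      tendsto_atBot_add_const_left atTop 1 (tendsto_neg_atTop_atBot.comp hgrow)
  exact (tendsto_id.atTop_mul_atBot₀ hneg).congr' hfactor

theorem tendsto_sub_const_mul_rpow_neg_rpow_atBot {c L s t : ℝ} (hc : 0 < c) (hL : 0 < L)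
    (ht : 0 < t) (hts : t < s) :
    Tendsto (fun x : ℝ => x - c * (L * x ^ (-s)) ^ (-1 / t)) atTop atBot := by
  refine (tendsto_sub_const_mul_rpow_atBot (C := c * L ^ (-1 / t))
    (by positivity) ((one_lt_div ht).2 hts)).congr' ?_
  filter_upwards [eventually_ge_atTop 0] with x hx
  rw [mul_rpow_neg_rpow_neg_one_div hL.le hx, mul_assoc]

theorem tendsto_ofReal_rpow_atBot {b : ℝ} (hb : 1 < b) :
    Tendsto (fun x : ℝ => ENNReal.ofReal (b ^ x)) atBot (𝓝 0) := by
  simpa only [ENNReal.ofReal_zero] using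
    ENNReal.tendsto_ofReal (tendsto_rpow_atBot_of_base_gt_one b hb)

end Asymptotics

section Covering

variable {α : Type*} [MeasurableSpace α] [PseudoMetricSpace X] {μ : Measure α} {f : α → X} {ε : ℝ}

theorem measure_univ_le_card_mul_of_dist_decode_le {ι : Type*} [Fintype ι] {E : α → ι} {D : ι → X}
    {b : ℝ≥0∞} (hED : ∀ x, dist (f x) (D (E x)) ≤ ε)
    (hball : ∀ z, μ (f ⁻¹' closedBall z ε) ≤ b) :
    μ univ ≤ Fintype.card ι * b := by
  have hcover : univ ⊆ ⋃ i, f ⁻¹' closedBall (D i) ε := fun x _ => mem_iUnion.2 ⟨E x, hED x⟩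
  calc μ univ ≤ μ (⋃ i, f ⁻¹' closedBall (D i) ε) := measure_mono hcover
    _ ≤ ∑ i, μ (f ⁻¹' closedBall (D i) ε) := measure_iUnion_fintype_le μ _
    _ ≤ Finset.card Finset.univ • b := Finset.sum_le_card_nsmul _ _ _ fun i _ => hball (D i)
    _ = Fintype.card ι * b := nsmul_eq_mul _ _

theorem measure_univ_le_two_rpow_sub_of_dist_decode_le {R : ℕ} {E : α → (Fin R → Bool)}
    {D : (Fin R → Bool) → X} {a : ℝ} (hED : ∀ x, dist (f x) (D (E x)) ≤ ε)
    (hball : ∀ z, μ (f ⁻¹' closedBall z ε) ≤ ENNReal.ofReal (2 ^ (-a))) :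
    μ univ ≤ ENNReal.ofReal (2 ^ ((R : ℝ) - a)) :=
  calc μ univ ≤ Fintype.card (Fin R → Bool) * ENNReal.ofReal (2 ^ (-a)) :=
        measure_univ_le_card_mul_of_dist_decode_le hED hball
    _ = ENNReal.ofReal (2 ^ R) * ENNReal.ofReal (2 ^ (-a)) := by simp
    _ = ENNReal.ofReal (2 ^ ((R : ℝ) - a)) := by
        rw [← ENNReal.ofReal_mul (by positivity), sub_eq_add_neg, Real.rpow_add two_pos,
          Real.rpow_natCast]

end Covering

section CompressionRate

variable [NormedAddCommGroup X] {S : Set X} {s : ℝ}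

theorem CompressibleAt.exists_dist_decode_le (hs : CompressibleAt S s) :
    ∃ (E : (R : ℕ) → S → (Fin R → Bool)) (D : (R : ℕ) → (Fin R → Bool) → X) (L : ℝ), 0 < L ∧
      ∀ R : ℕ, 0 < R → ∀ x : S, dist (x : X) (D R (E R x)) ≤ L * (R : ℝ) ^ (-s) := by
  obtain ⟨E, D, K, hK⟩ := hs
  refine ⟨E, D, max K 1, lt_max_of_lt_right one_pos, fun R hR x => ?_⟩
  have hRs : (0 : ℝ) < (R : ℝ) ^ s := Real.rpow_pos_of_pos (Nat.cast_pos.2 hR) s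
  rw [dist_eq_norm, Real.rpow_neg R.cast_nonneg, ← div_eq_mul_inv, le_div_iff₀' hRs]
  exact (hK R hR x).trans (le_max_left K 1)

variable [MeasurableSpace X] {P : Measure S} {s₀ : ℝ}

theorem HasGrowthOrder.eq_zero_of_compressibleAt (hP : HasGrowthOrder S P s₀) (hs₀ : 0 ≤ s₀)
    (hs : CompressibleAt S s) (hlt : s₀ < s) : P = 0 := by
  obtain ⟨t, hs₀t, hts⟩ := exists_between hlt
  have ht : 0 < t := hs₀.trans_lt hs₀t
  obtain ⟨ε₀, c, hε₀, hc, hball⟩ := hP t hs₀t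
  obtain ⟨E, D, L, hL, hED⟩ := hs.exists_dist_decode_le
  have hε : Tendsto (fun R : ℕ => L * (R : ℝ) ^ (-s)) atTop (𝓝 0) := by
    simpa only [mul_zero, Function.comp_def] using
      ((tendsto_rpow_neg_atTop (ht.trans hts)).comp tendsto_natCast_atTop_atTop).const_mul L
  have hbound : ∀ᶠ R : ℕ in atTop,
      P univ ≤ ENNReal.ofReal (2 ^ ((R : ℝ) - c * (L * (R : ℝ) ^ (-s)) ^ (-1 / t))) := by
    filter_upwards [hε.eventually_lt_const hε₀, eventually_gt_atTop 0] with R hεR hR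
    exact measure_univ_le_two_rpow_sub_of_dist_decode_le (hED R hR)
      fun z => hball z _ (by positivity) hεR
  have hlim : Tendsto
      (fun R : ℕ => ENNReal.ofReal (2 ^ ((R : ℝ) - c * (L * (R : ℝ) ^ (-s)) ^ (-1 / t))))
      atTop (𝓝 0) :=
    (tendsto_ofReal_rpow_atBot one_lt_two).comp
      ((tendsto_sub_const_mul_rpow_neg_rpow_atBot hc hL ht hts).comp tendsto_natCast_atTop_atTop)
  exact Measure.measure_univ_eq_zero.1 (nonpos_iff_eq_zero.1 (ge_of_tendsto hlim hbound))

theorem CompressibleAt.le_of_hasGrowthOrder [NeZero P] (hs : CompressibleAt S s) (hs₀ : 0 ≤ s₀)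
    (hP : HasGrowthOrder S P s₀) : s ≤ s₀ :=
  not_lt.1 fun hlt => NeZero.ne P (hP.eq_zero_of_compressibleAt hs₀ hs hlt)

end CompressionRate

theorem statement6_general {X : Type*} [NormedAddCommGroup X] [MeasurableSpace X]
    (S : Set X) (P : Measure S) [NeZero P]
    (s₀ : ℝ) (hs₀ : 0 ≤ s₀) (hP : HasGrowthOrder S P s₀) :
    (∀ s : ℝ, CompressibleAt S s → s ≤ s₀) ∧ optRate S ≤ ENNReal.ofReal s₀ := by
  have hrate : ∀ s : ℝ, CompressibleAt S s → s ≤ s₀ := fun s hs => hs.le_of_hasGrowthOrder hs₀ hP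
  refine ⟨hrate, sSup_le ?_⟩
  rintro _ ⟨s, ⟨_, hs⟩, rfl⟩
  exact ENNReal.ofReal_le_ofReal (hrate s hs)

theorem statement6 {X : Type*} [NormedAddCommGroup X] [NormedSpace ℝ X] [CompleteSpace X]
    [MeasurableSpace X] [BorelSpace X]
    (S : Set X) (P : Measure S) [IsProbabilityMeasure P]
    (s₀ : ℝ) (hs₀ : 0 ≤ s₀) (hP : HasGrowthOrder S P s₀) :
    (∀ s : ℝ, 0 ≤ s → CompressibleAt S s → s ≤ s₀) ∧
    optRate S ≤ ENNReal.ofReal s₀ :=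
  (statement6_general S P s₀ hs₀ hP).imp_left fun hrate s _ => hrate s
end
end

section
/- Let X, Y be real Banach spaces, S ⊆ X, S' ⊆ Y, and let Φ : S → S' be measurable with respect to the trace Borel σ-algebras and expansive, i.e., there is κ > 0 such that ‖Φ(x) − Φ(x')‖_Y ≥ κ·‖x − x'‖_X for all x, x' ∈ S. If s0 ∈ [0,∞) and P is a Borel probability measure on S of growth order s0, then the pushforward measure P ∘ Φ^{−1} is a Borel probability measure on S' which also has growth order s0 (with respect to Y). -/
open MeasureTheory Metric Set ENNReal

noncomputable section

variable {X : Type*}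

/-!
If the preimage of a closed ball of radius `ε` under an expansive map is nonempty, it lies in a
ball of radius `2 * ε / κ` around any of its points. Growth orders do not see such a rescaling of
the radius, which only multiplies the constant `c` by `(2 / κ) ^ (-1 / s)`.
-/

open scoped NNReal

lemma antilipschitzWith_inv_of_mul_dist_le {α β : Type*} [PseudoMetricSpace α]
    [PseudoMetricSpace β] {f : α → β} {κ : ℝ≥0} (hκ : 0 < κ)
    (hf : ∀ x y, κ * dist x y ≤ dist (f x) (f y)) : AntilipschitzWith κ⁻¹ f :=
  .of_le_mul_dist fun x y => by
    rw [NNReal.coe_inv, le_inv_mul_iff₀ (NNReal.coe_pos.2 hκ)]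
    exact hf x y

lemma preimage_closedBall_subset_closedBall_of_antilipschitzWith {α β : Type*}
    [PseudoMetricSpace α] [PseudoMetricSpace β] {f : α → β} {K : ℝ≥0} (hf : AntilipschitzWith K f)
    {x : α} {y : β} {r : ℝ} (hx : f x ∈ closedBall y r) :
    f ⁻¹' closedBall y r ⊆ closedBall x (2 * K * r) := fun z hz =>
  calc dist z x ≤ K * dist (f z) (f x) := hf.le_mul_dist z x
    _ ≤ K * (r + r) := by gcongr; exact (dist_triangle_right _ _ y).trans (add_le_add hz hx)
    _ = 2 * K * r := by ring

section GrowthOrder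

variable {Y : Type*} [NormedAddCommGroup X] [MeasurableSpace X]
  [NormedAddCommGroup Y] [MeasurableSpace Y] {S : Set X} {S' : Set Y} {P : Measure S} {s₀ : ℝ}

lemma exists_measure_map_closedBall_le_of_antilipschitzWith [OpensMeasurableSpace Y]
    {Φ : S → S'} {K : ℝ≥0} (hΦ : AntilipschitzWith K Φ) (hΦP : AEMeasurable Φ P) (y : Y) (r : ℝ) :
    ∃ x : X, P.map Φ {z : S' | (z : Y) ∈ closedBall y r} ≤
      P {z : S | (z : X) ∈ closedBall x (2 * K * r)} := by
  have hball : MeasurableSet {z : S' | (z : Y) ∈ closedBall y r} :=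
    measurable_subtype_coe measurableSet_closedBall
  have hΦY : AntilipschitzWith K fun x => (Φ x : Y) := hΦ
  rw [Measure.map_apply_of_aemeasurable hΦP hball]
  rcases (Φ ⁻¹' {z : S' | (z : Y) ∈ closedBall y r}).eq_empty_or_nonempty with hempty | ⟨x, hx⟩
  · exact ⟨0, by simp only [hempty, measure_empty, zero_le]⟩
  · exact ⟨x, measure_mono (preimage_closedBall_subset_closedBall_of_antilipschitzWith hΦY hx)⟩

lemma HasGrowthOrder.of_measure_closedBall_le {Q : Measure S'} {C : ℝ} (hC : 0 < C)
    (hP : HasGrowthOrder S P s₀)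
    (hQP : ∀ (y : Y) (ε : ℝ), 0 < ε → ∃ x : X,
      Q {z : S' | (z : Y) ∈ closedBall y ε} ≤ P {z : S | (z : X) ∈ closedBall x (C * ε)}) :
    HasGrowthOrder S' Q s₀ := by
  intro s hs
  obtain ⟨ε₀, c, hε₀, hc, hball⟩ := hP s hs
  refine ⟨ε₀ / C, c * C ^ (-(1 : ℝ) / s), by positivity, by positivity, fun y ε hε hεlt => ?_⟩
  obtain ⟨x, hx⟩ := hQP y ε hε
  calc Q {z : S' | (z : Y) ∈ closedBall y ε}
      ≤ P {z : S | (z : X) ∈ closedBall x (C * ε)} := hx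
    _ ≤ ENNReal.ofReal (2 ^ (-(c * (C * ε) ^ (-(1 : ℝ) / s)))) :=
      hball x (C * ε) (by positivity) ((lt_div_iff₀' hC).1 hεlt)
    _ = ENNReal.ofReal (2 ^ (-(c * C ^ (-(1 : ℝ) / s) * ε ^ (-(1 : ℝ) / s)))) := by
      rw [Real.mul_rpow hC.le hε.le, mul_assoc]

theorem statement7_general [OpensMeasurableSpace Y] {Φ : S → S'} {K : ℝ≥0}
    (hΦ : AntilipschitzWith K Φ) (hΦP : AEMeasurable Φ P) (hP : HasGrowthOrder S P s₀) :
    HasGrowthOrder S' (P.map Φ) s₀ := by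
  -- `2 * K` would vanish for `K = 0`, which is possible when `S` has at most one point.
  have hC : (0 : ℝ) < 2 * K + 1 := by positivity
  refine hP.of_measure_closedBall_le hC fun y ε hε => ?_
  obtain ⟨x, hx⟩ := exists_measure_map_closedBall_le_of_antilipschitzWith hΦ hΦP y ε
  have hradius : 2 * K * ε ≤ (2 * K + 1) * ε := by gcongr; exact le_add_of_nonneg_right zero_le_one
  exact ⟨x, hx.trans (measure_mono fun _ hz => closedBall_subset_closedBall hradius hz)⟩

end GrowthOrder

theorem statement7 {X Y : Type*}
    [NormedAddCommGroup X] [NormedSpace ℝ X] [CompleteSpace X]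
    [NormedAddCommGroup Y] [NormedSpace ℝ Y] [CompleteSpace Y]
    [MeasurableSpace X] [BorelSpace X] [MeasurableSpace Y] [BorelSpace Y]
    (S : Set X) (S' : Set Y)
    (Φ : S → S') (hΦ : Measurable Φ)
    (κ : ℝ) (hκ : 0 < κ)
    (hexp : ∀ x x' : S, κ * ‖(x : X) - (x' : X)‖ ≤ ‖(↑(Φ x) : Y) - (↑(Φ x') : Y)‖)
    (s₀ : ℝ) (hs₀ : 0 ≤ s₀)
    (P : Measure S) [IsProbabilityMeasure P] (hP : HasGrowthOrder S P s₀) :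
    IsProbabilityMeasure (P.map Φ) ∧ HasGrowthOrder S' (P.map Φ) s₀ := by
  lift κ to ℝ≥0 using hκ.le
  have hΦK : AntilipschitzWith κ⁻¹ Φ := antilipschitzWith_inv_of_mul_dist_le hκ <| by
    simpa only [Subtype.dist_eq, dist_eq_norm] using hexp
  exact ⟨Measure.isProbabilityMeasure_map hΦ.aemeasurable,
    statement7_general hΦK hΦ.aemeasurable hP⟩
end
end
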